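/- Let n > 1 and let r = (r_1, …, r_n) ∈ ℕ^n satisfy r_1 + 2r_2 + ⋯ + n·r_n = n and |r| := r_1 + ⋯ + r_n < n. For a set partition π of [n], define the word ψ(π) = w_1 w_2 ⋯ w_{n−1} by: w_i is the letter j if i is the minimal element of a block of π of size j, and w_i is the letter 0 otherwise. Then π ↦ ψ(π) is a bijection from the set of connected noncrossing set partitions of [n] of type r onto ℬ(r), the set of words of length n − 1 lying in ℬ with exactly n − |r| − 1 occurrences of letter 0 and exactly r_i occurrences of letter i for 1 ≤ i ≤ n. -/

import Mathlib

/-- A set partition of `[n] = {1, …, n}`, encoded as a `Finpartition` of `Finset.Icc 1 n`. -/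
abbrev SetPartitionOn (n : ℕ) := Finpartition (Finset.Icc 1 n)

/-- `π` has type `r = (r_1, …, r_n)` if for each `i` the number of blocks of size `i` is `r_i`. -/
def HasType {n : ℕ} (π : SetPartitionOn n) (r : Fin n → ℕ) : Prop :=
  ∀ i : Fin n, (π.parts.filter (fun B => B.card = i.1 + 1)).card = r i

/-- `π` is noncrossing: there are no `a < b < c < d` with `a, c` in one block and
`b, d` in a different block. -/
def Noncrossing {n : ℕ} (π : SetPartitionOn n) : Prop :=
  ¬ ∃ a b c d : ℕ, a < b ∧ b < c ∧ c < d ∧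
      ∃ B ∈ π.parts, ∃ B' ∈ π.parts, B ≠ B' ∧ a ∈ B ∧ c ∈ B ∧ b ∈ B' ∧ d ∈ B'

/-- `(i, j)` is an arc of `π`: `i < j` lie in a common block with no element of that
block strictly between them. -/
def IsArc {n : ℕ} (π : SetPartitionOn n) (i j : ℕ) : Prop :=
  i < j ∧ ∃ B ∈ π.parts, i ∈ B ∧ j ∈ B ∧ ∀ k ∈ B, ¬ (i < k ∧ k < j)

/-- `π` is nonnesting: there are no arcs `(a, d)` and `(b, c)` with `a < b < c < d`. -/
def Nonnesting {n : ℕ} (π : SetPartitionOn n) : Prop :=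
  ¬ ∃ a b c d : ℕ, a < b ∧ b < c ∧ c < d ∧ IsArc π a d ∧ IsArc π b c

/-- `i ∈ {1, …, n-1}` is a cut of `π` if no block contains both an element `≤ i` and an
element `> i`. -/
def IsCut {n : ℕ} (π : SetPartitionOn n) (i : ℕ) : Prop :=
  1 ≤ i ∧ i ≤ n - 1 ∧ ∀ B ∈ π.parts, (∀ x ∈ B, x ≤ i) ∨ (∀ x ∈ B, i < x)

/-- `π` is connected if it has no cuts. -/
def Connected {n : ℕ} (π : SetPartitionOn n) : Prop := ∀ i, ¬ IsCut π i

/-- The number of cuts of `π`; `π` has exactly `m` connected components iff this is `m - 1`. -/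
noncomputable def cutCount {n : ℕ} (π : SetPartitionOn n) : ℕ := Set.ncard {i : ℕ | IsCut π i}

/-- The weight of a word: the sum of `(a - 1)` over its letters, as an integer. -/
def wt (w : List ℕ) : ℤ := (w.map (fun a => (a : ℤ) - 1)).sum

/-- The set `ℬ` of words of weight 1 all of whose nonempty prefixes have positive weight. -/
def Bset : Set (List ℕ) :=
  {w | wt w = 1 ∧ ∀ j, 0 < j → j ≤ w.length → 0 < wt (w.take j)}

/-- The word `ψ(π) = w_1 ⋯ w_{n-1}`: `w_i` is the letter `j` if `i` is the minimal element
of a block of `π` of size `j`, and is the letter `0` otherwise.  (The `i`-th letter is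
computed as the sum of `|B|` over the (at most one) block `B` whose minimum is `i`.) -/
def psi (n : ℕ) (π : SetPartitionOn n) : List ℕ :=
  (List.range (n - 1)).map (fun k =>
    (π.parts.filter (fun B => (k + 1) ∈ B ∧ ∀ x ∈ B, k + 1 ≤ x)).sum Finset.card)

open Finset

noncomputable def mn {n : ℕ} (π : SetPartitionOn n) (x : ℕ) : ℕ := sInf (π.part x : Set ℕ)

lemma mn_mem {n : ℕ} (π : SetPartitionOn n) {x : ℕ} (hx : x ∈ Icc 1 n) : mn π x ∈ π.part x := by
  have h : (π.part x : Set ℕ).Nonempty := ⟨x, by simpa using π.mem_part hx⟩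
  exact_mod_cast Nat.sInf_mem h

lemma mn_le {n : ℕ} (π : SetPartitionOn n) {x y : ℕ} (h : y ∈ π.part x) : mn π x ≤ y :=
  Nat.sInf_le (by exact_mod_cast h)

lemma mn_part {n : ℕ} (π : SetPartitionOn n) {x y : ℕ} (hx : x ∈ Icc 1 n) (h : y ∈ π.part x) :
    π.part y = π.part x :=
  π.part_eq_of_mem (π.part_mem.2 hx) h

lemma mem_part_iff_mn {n : ℕ} (π : SetPartitionOn n) {x y : ℕ} (hx : x ∈ Icc 1 n)
    (hy : y ∈ Icc 1 n) : y ∈ π.part x ↔ mn π y = mn π x := by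
  constructor
  · intro h
    unfold mn
    rw [mn_part π hx h]
  · intro h
    have h1 := mn_part π hx (mn_mem π hx)
    have h2 := mn_part π hy (mn_mem π hy)
    rw [h] at h2
    rw [← h1, h2]
    exact π.mem_part hy

lemma mn_mem_Icc {n : ℕ} (π : SetPartitionOn n) {x : ℕ} (hx : x ∈ Icc 1 n) :
    mn π x ∈ Icc 1 n := π.le (π.part_mem.2 hx) (mn_mem π hx)

lemma mn_le_self {n : ℕ} (π : SetPartitionOn n) {x : ℕ} (hx : x ∈ Icc 1 n) :
    mn π x ≤ x := mn_le π (π.mem_part hx)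

lemma mn_mn {n : ℕ} (π : SetPartitionOn n) {x : ℕ} (hx : x ∈ Icc 1 n) :
    mn π (mn π x) = mn π x :=
  (mem_part_iff_mn π hx (mn_mem_Icc π hx)).1 (mn_mem π hx)

lemma part_eq_filter {n : ℕ} (π : SetPartitionOn n) {x : ℕ} (hx : x ∈ Icc 1 n) :
    π.part x = (Icc 1 n).filter (fun y => mn π y = mn π x) := by
  ext y
  rw [mem_filter]
  constructor
  · intro h
    have hy : y ∈ Icc 1 n := π.le (π.part_mem.2 hx) h
    exact ⟨hy, (mem_part_iff_mn π hx hy).1 h⟩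
  · rintro ⟨hy, h⟩
    exact (mem_part_iff_mn π hx hy).2 h

lemma mem_parts_iff {n : ℕ} (π : SetPartitionOn n) (B : Finset ℕ) :
    B ∈ π.parts ↔ ∃ x ∈ Icc 1 n, B = (Icc 1 n).filter (fun y => mn π y = mn π x) := by
  constructor
  · intro h
    obtain ⟨x, hx⟩ := π.nonempty_of_mem_parts h
    have hx' : x ∈ Icc 1 n := π.le h hx
    exact ⟨x, hx', by rw [← part_eq_filter π hx', π.part_eq_of_mem h hx]⟩
  · rintro ⟨x, hx, rfl⟩
    rw [← part_eq_filter π hx]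
    exact π.part_mem.2 hx

lemma mem_parts_iff' {n : ℕ} (π : SetPartitionOn n) (B : Finset ℕ) :
    B ∈ π.parts ↔ ∃ m ∈ Icc 1 n, mn π m = m ∧ B = (Icc 1 n).filter (fun y => mn π y = m) := by
  rw [mem_parts_iff]
  constructor
  · rintro ⟨x, hx, rfl⟩
    exact ⟨mn π x, mn_mem_Icc π hx, mn_mn π hx, rfl⟩
  · rintro ⟨m, hm, h, rfl⟩
    exact ⟨m, hm, by rw [h]⟩

lemma ext_mn {n : ℕ} (π π' : SetPartitionOn n) (h : ∀ x ∈ Icc 1 n, mn π x = mn π' x) :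
    π = π' := by
  ext B
  rw [mem_parts_iff, mem_parts_iff]
  refine exists_congr fun x => and_congr_right fun hx => ?_
  rw [filter_congr (q := fun y => mn π' y = mn π' x)]
  intro y hy
  rw [h x hx, h y hy]

lemma noncrossing_iff {n : ℕ} (π : SetPartitionOn n) : Noncrossing π ↔
    ∀ a b c d, 1 ≤ a → a < b → b < c → c < d → d ≤ n → mn π a = mn π c → mn π b = mn π d →
      mn π a = mn π b := by
  unfold Noncrossing
  constructor
  · intro h a b c d ha hab hbc hcd hd h1 h2
    by_contra hne
    refine h ⟨a, b, c, d, hab, hbc, hcd, (Icc 1 n).filter (fun y => mn π y = mn π a), ?_,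
      (Icc 1 n).filter (fun y => mn π y = mn π b), ?_, ?_, ?_, ?_, ?_, ?_⟩
    · exact (mem_parts_iff _ _).2 ⟨a, by simp; omega, rfl⟩
    · exact (mem_parts_iff _ _).2 ⟨b, by simp; omega, rfl⟩
    · intro he
      have : a ∈ (Icc 1 n).filter (fun y => mn π y = mn π b) := by
        rw [← he]; simp; omega
      simp at this
      exact hne this.2
    all_goals simp; omega
  · rintro h ⟨a, b, c, d, hab, hbc, hcd, B, hB, B', hB', hne, haB, hcB, hbB, hdB⟩
    obtain ⟨x, hx, rfl⟩ := (mem_parts_iff _ _).1 hB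
    obtain ⟨y, hy, rfl⟩ := (mem_parts_iff _ _).1 hB'
    simp at haB hcB hbB hdB
    have := h a b c d (by omega) hab hbc hcd (by omega) (by omega) (by omega)
    apply hne
    rw [← haB.2, this, hbB.2]

lemma connected_iff {n : ℕ} (π : SetPartitionOn n) : Connected π ↔
    ∀ i, 1 ≤ i → i ≤ n - 1 → ∃ x ∈ Icc 1 n, i < x ∧ mn π x ≤ i := by
  unfold Connected IsCut
  refine forall_congr' fun i => ?_
  constructor
  · intro h h1 h2
    by_contra! hc
    refine h ⟨h1, h2, fun B hB => ?_⟩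
    obtain ⟨x, hx, rfl⟩ := (mem_parts_iff _ _).1 hB
    by_cases hxi : mn π x ≤ i
    · left
      intro y hy
      rw [mem_filter] at hy
      by_contra hyi
      have := hc y hy.1 (by omega)
      omega
    · right
      intro y hy
      rw [mem_filter] at hy
      have := mn_le_self π hy.1
      omega
  · rintro h ⟨h1, h2, hc⟩
    obtain ⟨x, hx, hix, hmi⟩ := h h1 h2
    rcases hc _ ((mem_parts_iff _ _).2 ⟨x, hx, rfl⟩) with h3 | h3
    · have := h3 x (by rw [mem_filter]; exact ⟨hx, rfl⟩)
      omega
    · have := h3 (mn π x) (by rw [mem_filter]; exact ⟨mn_mem_Icc π hx, mn_mn π hx⟩)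
      omega

/-- number of elements whose block has minimum i -/
noncomputable def LL {n : ℕ} (π : SetPartitionOn n) (i : ℕ) : ℕ :=
  ((Icc 1 n).filter (fun y => mn π y = i)).card

lemma LL_pos_iff {n : ℕ} (π : SetPartitionOn n) {i : ℕ} (hi : i ∈ Icc 1 n) :
    LL π i ≠ 0 ↔ mn π i = i := by
  unfold LL
  rw [card_ne_zero]
  constructor
  · rintro ⟨y, hy⟩
    rw [mem_filter] at hy
    rw [← hy.2]; exact mn_mn π hy.1
  · intro h
    exact ⟨i, by rw [mem_filter]; exact ⟨hi, h⟩⟩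

lemma psi_eq {n : ℕ} (π : SetPartitionOn n) :
    psi n π = (List.range (n - 1)).map (fun k => LL π (k + 1)) := by
  unfold psi
  apply List.map_congr_left
  intro k hk
  rw [List.mem_range] at hk
  have hk1 : k + 1 ∈ Icc 1 n := by simp; omega
  by_cases h : mn π (k + 1) = k + 1
  · have : (π.parts.filter (fun B => (k + 1) ∈ B ∧ ∀ x ∈ B, k + 1 ≤ x)) =
        {(Icc 1 n).filter (fun y => mn π y = k + 1)} := by
      ext B
      rw [mem_filter, mem_singleton]
      constructor
      · rintro ⟨hB, h1, h2⟩
        obtain ⟨m, hm, hmm, rfl⟩ := (mem_parts_iff' _ _).1 hB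
        rw [mem_filter] at h1
        rw [← h1.2, h]
      · rintro rfl
        refine ⟨(mem_parts_iff' _ _).2 ⟨_, hk1, h, rfl⟩, ?_, ?_⟩
        · rw [mem_filter]; exact ⟨hk1, h⟩
        · intro x hx
          rw [mem_filter] at hx
          have := mn_le_self π hx.1
          omega
    rw [this, sum_singleton]; rfl
  · have h0 : LL π (k + 1) = 0 := by
      by_contra h0
      exact h ((LL_pos_iff π hk1).1 h0)
    rw [h0, filter_false_of_mem, sum_empty]
    rintro B hB ⟨h1, h2⟩
    obtain ⟨m, hm, hmm, rfl⟩ := (mem_parts_iff' _ _).1 hB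
    have h3 := h2 m (by rw [mem_filter]; exact ⟨hm, hmm⟩)
    rw [mem_filter] at h1
    have := mn_le_self π hk1
    omega

lemma type_count {n : ℕ} (π : SetPartitionOn n) (c : ℕ) (hc : 1 ≤ c) :
    (π.parts.filter (fun B => B.card = c)).card = ((Icc 1 n).filter (fun m => LL π m = c)).card := by
  symm
  apply card_bij (fun m _ => (Icc 1 n).filter (fun y => mn π y = m))
  · intro m hm
    rw [mem_filter] at hm
    rw [mem_filter]
    exact ⟨(mem_parts_iff' _ _).2 ⟨m, hm.1, (LL_pos_iff π hm.1).1 (by omega), rfl⟩, hm.2⟩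
  · intro m hm m' hm' h
    rw [mem_filter] at hm hm'
    have h1 := (LL_pos_iff π hm.1).1 (by omega)
    have : m ∈ (Icc 1 n).filter (fun y => mn π y = m') := by
      rw [← h, mem_filter]; exact ⟨hm.1, h1⟩
    rw [mem_filter] at this
    omega
  · intro B hB
    rw [mem_filter] at hB
    obtain ⟨m, hm, hmm, rfl⟩ := (mem_parts_iff' _ _).1 hB.1
    exact ⟨m, by rw [mem_filter]; exact ⟨hm, hB.2⟩, rfl⟩

lemma count_psi {n : ℕ} (hn : 1 < n) (π : SetPartitionOn n) (hL : LL π n = 0) (c : ℕ) (hc : 1 ≤ c) :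
    (psi n π).count c = ((Icc 1 n).filter (fun m => LL π m = c)).card := by
  have h1 : (psi n π).count c = ((range (n-1)).filter (fun k => LL π (k+1) = c)).card := by
    rw [psi_eq, List.count_eq_countP, List.countP_map, card_def, filter_val, range_val,
      ← Multiset.countP_eq_card_filter, Multiset.range, Multiset.coe_countP]
    apply List.countP_congr
    intro k _
    simp
  rw [h1]
  apply card_bij (fun k _ => k + 1)
  · intro k hk
    simp at hk ⊢
    omega
  · intro a _ b _ h
    omega
  · intro m hm
    simp at hm
    have : m ≠ n := by rintro rfl; omega
    exact ⟨m - 1, by simp; rw [Nat.sub_add_cancel hm.1.1]; omega, by omega⟩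

/-- prefix weights of a sequence -/
def PP (q : ℕ → ℕ) (j : ℕ) : ℤ := ∑ k ∈ range j, ((q k : ℤ) - 1)

lemma wt_eq (w : List ℕ) : wt w = (w.map (fun a : ℕ => (a : ℤ) - 1)).sum := by
  unfold wt
  induction w with
  | nil => rfl
  | cons a w ih => simp_all

lemma wt_take (w : List ℕ) (j : ℕ) (hj : j ≤ w.length) :
    wt (w.take j) = PP (fun k => w.getD k 0) j := by
  rw [wt_eq]
  induction j with
  | zero => simp [PP]
  | succ j ih =>
    have ih := ih (by omega)
    unfold PP at *
    rw [sum_range_succ, ← ih, List.take_add_one]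
    have : j < w.length := by omega
    simp [this]

lemma sum_LL {n : ℕ} (π : SetPartitionOn n) (j : ℕ) :
    ∑ k ∈ range j, LL π (k + 1) = ((Icc 1 n).filter (fun y => mn π y ≤ j)).card := by
  induction j with
  | zero =>
    symm
    simp only [range_zero, sum_empty, card_eq_zero]
    apply filter_false_of_mem
    intro x hx
    have := mn_mem_Icc π hx
    rw [mem_Icc] at this
    omega
  | succ j ih =>
    rw [sum_range_succ, ih]
    unfold LL
    rw [← card_union_of_disjoint, ← filter_or]
    · congr 1
      apply filter_congr
      intro x _
      omega
    · rw [disjoint_filter]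
      intro x _ h
      omega

lemma PP_LL {n : ℕ} (π : SetPartitionOn n) (j : ℕ) (hj : j ≤ n) :
    PP (fun k => LL π (k + 1)) j =
      ((Icc 1 n).filter (fun y => j < y ∧ mn π y ≤ j)).card := by
  have h : PP (fun k => LL π (k + 1)) j = (∑ k ∈ range j, LL π (k + 1) : ℕ) - j := by
    simp [PP]
  rw [h, sum_LL]
  have : (Icc 1 n).filter (fun y => mn π y ≤ j) =
      (Icc 1 n).filter (fun y => j < y ∧ mn π y ≤ j) ∪ Icc 1 j := by
    ext x
    simp only [mem_union, mem_filter]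
    constructor
    · rintro ⟨h1, h2⟩
      by_cases hx : j < x
      · left; exact ⟨h1, hx, h2⟩
      · right; simp at h1 ⊢; omega
    · rintro (⟨h1, h2, h3⟩ | h1)
      · exact ⟨h1, h3⟩
      · have hx : x ∈ Icc 1 n := by simp at h1 ⊢; omega
        have := mn_le_self π hx
        simp at h1
        exact ⟨hx, by omega⟩
  rw [this, card_union_of_disjoint]
  · simp
  · rw [disjoint_left]
    intro x h1 h2
    simp at h1 h2
    omega

lemma PP_congr {q q' : ℕ → ℕ} {j : ℕ} (h : ∀ k < j, q k = q' k) : PP q j = PP q' j := by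
  unfold PP
  apply sum_congr rfl
  intro k hk
  rw [h k (by simpa using hk)]

/-- decoded minimum -/
def MM (q : ℕ → ℕ) (t : ℕ) : ℕ :=
  if q (t - 1) ≠ 0 then t else
    Nat.findGreatest (fun m => 1 ≤ m ∧ PP q (m - 1) < PP q (t - 1)) (t - 1)

lemma psi_getD {n : ℕ} (π : SetPartitionOn n) (hL : LL π n = 0) (k : ℕ) (hk : k < n) :
    (psi n π).getD k 0 = LL π (k + 1) := by
  rw [psi_eq]
  by_cases h : k < n - 1
  · simp [List.getD_eq_getElem?_getD, h]
  · have : k + 1 = n := by omega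
    rw [this, hL]
    simp [List.getD_eq_getElem?_getD, h]

lemma mn_eq_MM {n : ℕ} (π : SetPartitionOn n) (hN : Noncrossing π) (hL : LL π n = 0) (t : ℕ)
    (ht : t ∈ Icc 1 n) : mn π t = MM (fun k => (psi n π).getD k 0) t := by
  rw [noncrossing_iff] at hN
  have ht' := ht
  rw [mem_Icc] at ht'
  have hq : ∀ j ≤ n, PP (fun k => (psi n π).getD k 0) j =
      ((Icc 1 n).filter (fun y => j < y ∧ mn π y ≤ j)).card := by
    intro j hj
    rw [← PP_LL π j hj]
    apply PP_congr
    intro k hk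
    exact psi_getD π hL k (by omega)
  unfold MM
  beta_reduce
  rw [psi_getD π hL (t-1) (by omega), Nat.sub_add_cancel ht'.1]
  split_ifs with h
  · exact (LL_pos_iff π ht).1 h
  · rw [LL_pos_iff π ht] at h
    symm
    have hm := mn_mem_Icc π ht
    have hmt := mn_le_self π ht
    have hmm := mn_mn π ht
    set m := mn π t with hmdef
    rw [mem_Icc] at hm
    rw [Nat.findGreatest_eq_iff]
    refine ⟨by omega, fun _ => ⟨hm.1, ?_⟩, ?_⟩
    · rw [hq _ (by omega), hq _ (by omega)]
      norm_cast
      apply card_lt_card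
      rw [ssubset_iff_of_subset]
      · refine ⟨t, ?_, ?_⟩
        · simp; omega
        · simp; omega
      · intro x hx
        simp only [mem_filter] at hx ⊢
        obtain ⟨hx, h1, h2⟩ := hx
        have hx' := hx
        rw [mem_Icc] at hx'
        refine ⟨hx, ?_, by omega⟩
        by_contra hxt
        have hxm : x ≠ m := by rintro rfl; omega
        have hxt : x ≠ t := by rintro rfl; omega
        have hmx := mn_mem_Icc π hx
        rw [mem_Icc] at hmx
        have := hN (mn π x) m x t hmx.1 (by omega) (by omega) (by omega) (by omega)
          (mn_mn π hx) hmm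
        rw [mn_mn π hx, hmm] at this
        omega
    · rintro m' h1 h2 ⟨h3, h4⟩
      rw [hq _ (by omega), hq _ (by omega)] at h4
      norm_cast at h4
      revert h4
      rw [imp_false, not_lt]
      apply card_le_card
      intro x hx
      simp only [mem_filter] at hx ⊢
      obtain ⟨hx, h5, h6⟩ := hx
      refine ⟨hx, by omega, ?_⟩
      by_contra h7
      have hx' := hx
      rw [mem_Icc] at hx'
      have hxt : x ≠ t := by rintro rfl; omega
      have := hN m (mn π x) t x hm.1 (by omega) (by omega) (by omega) (by omega) hmm (mn_mn π hx)
      rw [hmm, mn_mn π hx] at this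
      omega

lemma exists_partition (n : ℕ) (M : ℕ → ℕ) (h1 : ∀ x ∈ Icc 1 n, M x ∈ Icc 1 n)
    (h2 : ∀ x ∈ Icc 1 n, M x ≤ x) (h3 : ∀ x ∈ Icc 1 n, M (M x) = M x) :
    ∃ π : SetPartitionOn n, ∀ x ∈ Icc 1 n, mn π x = M x := by
  let P : SetPartitionOn n := Finpartition.ofExistsUnique
    ((Icc 1 n).image (fun x => (Icc 1 n).filter (fun y => M y = M x)))
    (by
      intro p hp
      obtain ⟨x, hx, rfl⟩ := mem_image.1 hp
      exact filter_subset _ _)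
    (by
      intro a ha
      refine ⟨(Icc 1 n).filter (fun y => M y = M a), ⟨mem_image.2 ⟨a, ha, rfl⟩, ?_⟩, ?_⟩
      · rw [mem_filter]; exact ⟨ha, rfl⟩
      · rintro p ⟨hp, hap⟩
        obtain ⟨x, hx, rfl⟩ := mem_image.1 hp
        rw [mem_filter] at hap
        rw [hap.2])
    (by
      intro h
      obtain ⟨x, hx, h⟩ := mem_image.1 h
      have : x ∈ (Icc 1 n).filter (fun y => M y = M x) := by rw [mem_filter]; exact ⟨hx, rfl⟩
      rw [h] at this
      simp at this)
  refine ⟨P, fun x hx => ?_⟩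
  have hp : P.part x = (Icc 1 n).filter (fun y => M y = M x) := by
    apply P.part_eq_of_mem
    · exact mem_image.2 ⟨x, hx, rfl⟩
    · rw [mem_filter]; exact ⟨hx, rfl⟩
  apply le_antisymm
  · apply mn_le
    rw [hp, mem_filter]
    exact ⟨h1 x hx, h3 x hx⟩
  · have := mn_mem P hx
    rw [hp, mem_filter] at this
    rw [← this.2]
    exact h2 _ this.1

lemma MM_spec (q : ℕ → ℕ) (n : ℕ) (hP : ∀ j, 0 < j → j < n → 0 < PP q j) (h0 : q 0 ≠ 0)
    (t : ℕ) (h1 : 1 ≤ t) (h2 : t ≤ n) (hq : q (t - 1) = 0) :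
    1 ≤ MM q t ∧ MM q t < t ∧ PP q (MM q t - 1) < PP q (t - 1) ∧
      ∀ m, MM q t < m → m < t → PP q (t - 1) ≤ PP q (m - 1) := by
  have ht : t ≠ 1 := by rintro rfl; exact h0 hq
  have hM : MM q t = Nat.findGreatest (fun m => 1 ≤ m ∧ PP q (m - 1) < PP q (t - 1)) (t - 1) := by
    simp [MM, hq]
  have hs := (Nat.findGreatest_eq_iff (P := fun m => 1 ≤ m ∧ PP q (m - 1) < PP q (t - 1))
    (k := t - 1) (m := MM q t)).1 hM.symm
  obtain ⟨a, b, c⟩ := hs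
  have hne : MM q t ≠ 0 := by
    intro h
    refine c (n := 1) (by omega) (by omega) ⟨le_refl _, ?_⟩
    simpa [PP] using hP (t - 1) (by omega) (by omega)
  refine ⟨by omega, by omega, (b hne).2, ?_⟩
  intro m hm hmt
  have := c hm (by omega)
  by_contra h
  exact this ⟨by omega, by omega⟩

lemma MM_self (q : ℕ → ℕ) (t : ℕ) (h : q (t - 1) ≠ 0) : MM q t = t := by
  simp [MM, h]

lemma PP_succ (q : ℕ → ℕ) (j : ℕ) : PP q (j + 1) = PP q j + q j - 1 := by
  unfold PP; rw [sum_range_succ]; ring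

lemma MM_opener (q : ℕ → ℕ) (n : ℕ) (hP : ∀ j, 0 < j → j < n → 0 < PP q j) (h0 : q 0 ≠ 0)
    (t : ℕ) (h1 : 1 ≤ t) (h2 : t ≤ n) : q (MM q t - 1) ≠ 0 := by
  by_cases hq : q (t - 1) = 0
  · obtain ⟨a, b, c, d⟩ := MM_spec q n hP h0 t h1 h2 hq
    intro h
    have h3 := PP_succ q (MM q t - 1)
    rw [h, Nat.sub_add_cancel a] at h3
    by_cases he : MM q t = t - 1
    · rw [he] at h3 c; push_cast at h3; omega
    · have := d (MM q t + 1) (by omega) (by omega)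
      simp at this
      push_cast at h3
      omega
  · rwa [MM_self q t hq]

lemma MM_upper (q : ℕ → ℕ) (n : ℕ) (hP : ∀ j, 0 < j → j < n → 0 < PP q j) (h0 : q 0 ≠ 0)
    (t : ℕ) (h1 : 1 ≤ t) (h2 : t ≤ n) (hq : q (t - 1) = 0) :
    PP q (t - 1) ≤ PP q (MM q t - 1) + q (MM q t - 1) - 1 := by
  obtain ⟨a, b, c, d⟩ := MM_spec q n hP h0 t h1 h2 hq
  have h3 := PP_succ q (MM q t - 1)
  rw [Nat.sub_add_cancel a] at h3
  rw [← h3]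
  by_cases he : MM q t = t - 1
  · rw [he]
  · simpa using d (MM q t + 1) (by omega) (by omega)

lemma fiber_le (q : ℕ → ℕ) (n : ℕ) (hP : ∀ j, 0 < j → j < n → 0 < PP q j) (h0 : q 0 ≠ 0)
    (m : ℕ) : ((Icc 1 n).filter (fun t => MM q t = m)).card ≤ q (m - 1) := by
  by_cases hm : m ∈ (Icc 1 n).filter (fun t => MM q t = m)
  swap
  · rw [filter_false_of_mem]
    · simp
    intro t ht he
    apply hm
    have ht' := mem_Icc.1 ht
    have ho := MM_opener q n hP h0 t ht'.1 ht'.2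
    rw [he] at ho
    rw [mem_filter, mem_Icc]
    refine ⟨?_, MM_self q m ho⟩
    by_cases hq : q (t - 1) = 0
    · obtain ⟨a, b, c, d⟩ := MM_spec q n hP h0 t ht'.1 ht'.2 hq
      omega
    · rw [MM_self q t hq] at he
      omega
  have hm' := hm
  rw [mem_filter, mem_Icc] at hm'
  have ho := MM_opener q n hP h0 m hm'.1.1 hm'.1.2
  rw [hm'.2] at ho
  have hcl : ∀ t ∈ ((Icc 1 n).filter (fun t => MM q t = m)).erase m,
      (1 ≤ t ∧ t ≤ n) ∧ MM q t = m ∧ q (t - 1) = 0 := by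
    intro t ht
    rw [mem_erase, mem_filter, mem_Icc] at ht
    refine ⟨ht.2.1, ht.2.2, ?_⟩
    by_contra h
    rw [MM_self q t h] at ht
    exact ht.1 ht.2.2
  have hle : (((Icc 1 n).filter (fun t => MM q t = m)).erase m).card ≤
      (Ioc (PP q (m - 1)) (PP q (m - 1) + q (m - 1) - 1)).card := by
    apply card_le_card_of_injOn (fun t => PP q (t - 1))
    · intro t ht
      obtain ⟨h1, h2, h3⟩ := hcl t ht
      obtain ⟨a, b, c, d⟩ := MM_spec q n hP h0 t h1.1 h1.2 h3
      have := MM_upper q n hP h0 t h1.1 h1.2 h3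
      rw [h2] at this c
      simp only [coe_Ioc, Set.mem_Ioc]
      exact ⟨c, this⟩
    · have key : ∀ t t', t ∈ ((Icc 1 n).filter (fun t => MM q t = m)).erase m →
          t' ∈ ((Icc 1 n).filter (fun t => MM q t = m)).erase m → 
          PP q (t - 1) = PP q (t' - 1) → ¬ t < t' := by
        intro t t' ht ht' he hlt
        obtain ⟨h1, h2, h3⟩ := hcl t ht
        obtain ⟨h1', h2', h3'⟩ := hcl t' ht'
        obtain ⟨a, b, c, d⟩ := MM_spec q n hP h0 t h1.1 h1.2 h3
        obtain ⟨a', b', c', d'⟩ := MM_spec q n hP h0 t' h1'.1 h1'.2 h3'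
        have h4 := PP_succ q (t - 1)
        rw [Nat.sub_add_cancel h1.1, h3] at h4
        push_cast at h4
        by_cases h5 : t + 1 = t'
        · have : t' - 1 = t := by omega
          rw [this] at he
          omega
        · have := d' (t + 1) (by omega) (by omega)
          simp at this
          omega
      intro t ht t' ht' he
      have k1 := key t t' ht ht' he
      have k2 := key t' t ht' ht he.symm
      omega
  rw [card_erase_of_mem hm, Int.card_Ioc] at hle
  omega

/-- `ψ` is a bijection from the connected noncrossing partitions of `[n]` of type `r` onto
`ℬ(r)`, the words of length `n - 1` in `ℬ` with `n - |r| - 1` letters `0` and `r i`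
letters `i` for `1 ≤ i ≤ n`. -/
theorem psi_bijOn_noncrossing (n : ℕ) (hn : 1 < n) (r : Fin n → ℕ)
    (hrv : ∑ i, (i.1 + 1) * r i = n) (hr : ∑ i, r i < n) :
    Set.BijOn (psi n)
      {π : SetPartitionOn n | Noncrossing π ∧ HasType π r ∧ Connected π}
      {w : List ℕ | w.length = n - 1 ∧ w ∈ Bset ∧
        w.count 0 = n - (∑ i, r i) - 1 ∧ ∀ i : Fin n, w.count (i.1 + 1) = r i} := by
  have hlast : ∀ π : SetPartitionOn n, Connected π → LL π n = 0 := by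
    intro π hC
    rw [connected_iff] at hC
    obtain ⟨x, hx, h1, h2⟩ := hC (n - 1) (by omega) le_rfl
    have hxn : x = n := by rw [mem_Icc] at hx; omega
    subst hxn
    by_contra h
    have h := (LL_pos_iff π hx).1 h
    omega
  have hlen : ∀ π : SetPartitionOn n, (psi n π).length = n - 1 := by
    intro π; simp [psi]
  refine ⟨?_, ?_, ?_⟩
  · rintro π ⟨hN, hT, hC⟩
    have hL := hlast π hC
    have hwt : ∀ j ≤ n - 1, wt ((psi n π).take j) =
        ((Icc 1 n).filter (fun y => j < y ∧ mn π y ≤ j)).card := by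
      intro j hj
      rw [wt_take _ _ (by rw [hlen]; omega), ← PP_LL π j (by omega)]
      apply PP_congr
      intro k hk
      exact psi_getD π hL k (by omega)
    have hcount : ∀ i : Fin n, (psi n π).count (i.1 + 1) = r i := by
      intro i
      rw [count_psi hn π hL _ (by omega), ← type_count π _ (by omega)]
      exact hT i
    rw [connected_iff] at hC
    refine ⟨hlen π, ⟨?_, ?_⟩, ?_, hcount⟩
    · have h := hwt (n - 1) le_rfl
      rw [List.take_of_length_le (by rw [hlen])] at h
      rw [h]
      have : (Icc 1 n).filter (fun y => n - 1 < y ∧ mn π y ≤ n - 1) = {n} := by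
        obtain ⟨x, hx, h1, h2⟩ := hC (n - 1) (by omega) le_rfl
        have hxn : x = n := by rw [mem_Icc] at hx; omega
        subst hxn
        ext y
        rw [mem_filter, mem_Icc, mem_singleton]
        constructor
        · intro h; omega
        · rintro rfl; omega
      rw [this]; simp
    · intro j hj hj'
      rw [hlen] at hj'
      rw [hwt j hj']
      norm_cast
      rw [card_pos]
      obtain ⟨x, hx, h1, h2⟩ := hC j hj hj'
      exact ⟨x, by rw [mem_filter]; exact ⟨hx, h1, h2⟩⟩
    · have h1 : ∑ a ∈ range (n + 1), (psi n π).count a = (psi n π).length := by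
        have := Multiset.sum_count_eq_card (s := range (n + 1)) (m := (psi n π : Multiset ℕ)) (by
          intro a ha
          rw [Multiset.mem_coe, psi_eq, List.mem_map] at ha
          obtain ⟨k, _, rfl⟩ := ha
          rw [mem_range]
          have := card_filter_le (Icc 1 n) (fun y => mn π y = k + 1)
          rw [Nat.card_Icc] at this
          unfold LL
          omega)
        simpa using this
      rw [sum_range_succ', hlen, sum_range (fun a => (psi n π).count (a + 1)),
        sum_congr rfl (fun i _ => hcount i)] at h1
      have h2 : ∑ i, r i + (psi n π).count 0 = n - 1 := h1
      omega
  · rintro π ⟨hN, hT, hC⟩ π' ⟨hN', hT', hC'⟩ he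
    apply ext_mn
    intro x hx
    rw [mn_eq_MM π hN (hlast π hC) x hx, mn_eq_MM π' hN' (hlast π' hC') x hx, he]
  · rintro w ⟨hw, ⟨hB1, hB2⟩, hw0, hwc⟩
    set q : ℕ → ℕ := fun k => w.getD k 0 with hqdef
    have hP : ∀ j, 0 < j → j < n → 0 < PP q j := by
      intro j h1 h2
      rw [← wt_take w j (by omega)]
      exact hB2 j h1 (by omega)
    have h0 : q 0 ≠ 0 := by
      intro h
      have := hP 1 (by omega) hn
      simp [PP, h] at this
    have hqn : q (n - 1) = 0 := by
      simp [hqdef, List.getD_eq_getElem?_getD, hw]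
    have hPn : PP q (n - 1) = 1 := by
      rw [← wt_take w _ (by omega), List.take_of_length_le (by omega)]
      exact hB1
    have hMle : ∀ x ∈ Icc 1 n, MM q x ≤ x ∧ 1 ≤ MM q x := by
      intro x hx
      rw [mem_Icc] at hx
      by_cases h : q (x - 1) = 0
      · obtain ⟨a, b, c, d⟩ := MM_spec q n hP h0 x hx.1 hx.2 h
        omega
      · rw [MM_self q x h]; omega
    have hMM : ∀ x ∈ Icc 1 n, MM q (MM q x) = MM q x := by
      intro x hx
      rw [mem_Icc] at hx
      exact MM_self q _ (MM_opener q n hP h0 x hx.1 hx.2)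
    obtain ⟨π, hπ⟩ := exists_partition n (MM q)
      (by
        intro x hx
        have := hMle x hx
        rw [mem_Icc] at hx ⊢
        omega)
      (fun x hx => (hMle x hx).1) hMM
    have hLLf : ∀ m, LL π m = ((Icc 1 n).filter (fun t => MM q t = m)).card := by
      intro m
      unfold LL
      congr 1
      apply filter_congr
      intro x hx
      rw [hπ x hx]
    have hLLle : ∀ k ∈ range n, LL π (k + 1) ≤ q k := by
      intro k _
      rw [hLLf]
      simpa using fiber_le q n hP h0 (k + 1)
    have hsum : ∑ k ∈ range n, LL π (k + 1) = ∑ k ∈ range n, q k := by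
      rw [sum_LL, filter_true_of_mem]
      · have h := PP_succ q (n - 1)
        rw [Nat.sub_add_cancel (by omega), hPn, hqn] at h
        unfold PP at h
        rw [sum_sub_distrib] at h
        simp at h
        have h' : ((∑ k ∈ range n, q k : ℕ) : ℤ) = n := by push_cast; linarith
        simp
        omega
      · intro x hx
        have := mn_le_self π hx
        rw [mem_Icc] at hx
        omega
    have hLq : ∀ k < n, LL π (k + 1) = q k := by
      intro k hk
      exact (sum_eq_sum_iff_of_le hLLle).1 hsum k (mem_range.2 hk)
    have hLn : LL π n = 0 := by
      have := hLq (n - 1) (by omega)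
      rwa [Nat.sub_add_cancel (by omega), hqn] at this
    have hpsi : psi n π = w := by
      rw [psi_eq]
      apply List.ext_getElem
      · simp [hw]
      · intro k h1 h2
        rw [List.getElem_map, List.getElem_range, hLq k (by omega)]
        simp [hqdef, List.getD_eq_getElem?_getD, h2]
    refine ⟨π, ⟨?_, ?_, ?_⟩, hpsi⟩
    · rw [noncrossing_iff]
      intro a b c d ha hab hbc hcd hd h1 h2
      have ia : a ∈ Icc 1 n := by rw [mem_Icc]; omega
      have ib : b ∈ Icc 1 n := by rw [mem_Icc]; omega
      have ic : c ∈ Icc 1 n := by rw [mem_Icc]; omega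
      have id : d ∈ Icc 1 n := by rw [mem_Icc]; omega
      rw [hπ a ia, hπ c ic] at h1
      rw [hπ b ib, hπ d id] at h2
      rw [hπ a ia, hπ b ib]
      have la := hMle a ia
      have lb := hMle b ib
      have hz : ∀ t, MM q t < t → q (t - 1) = 0 := by
        intro t ht
        by_contra h
        rw [MM_self q t h] at ht
        omega
      obtain ⟨c1, c2, c3, c4⟩ := MM_spec q n hP h0 c (by omega) (by omega) (hz c (by omega))
      obtain ⟨d1, d2, d3, d4⟩ := MM_spec q n hP h0 d (by omega) (by omega) (hz d (by omega))
      by_contra hne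
      rcases lt_or_gt_of_ne hne with h | h
      · have e1 := c4 (MM q d) (by omega) (by omega)
        have e2 := d4 c (by omega) (by omega)
        omega
      · obtain ⟨b1, b2, b3, b4⟩ := MM_spec q n hP h0 b (by omega) (by omega) (hz b (by omega))
        have e1 := b4 (MM q c) (by omega) (by omega)
        have e2 := c4 b (by omega) (by omega)
        omega
    · intro i
      rw [type_count π _ (by omega), ← count_psi hn π hLn _ (by omega), hpsi]
      exact hwc i
    · rw [connected_iff]
      intro i h1 h2
      have h := hP i h1 (by omega)
      have : PP q i = PP (fun k => LL π (k + 1)) i := by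
        apply PP_congr
        intro k hk
        exact (hLq k (by omega)).symm
      rw [this, PP_LL π i (by omega)] at h
      norm_cast at h
      rw [card_pos] at h
      obtain ⟨x, hx⟩ := h
      rw [mem_filter] at hx
      exact ⟨x, hx.1, hx.2⟩
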